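/- Commutation of e0 and e2 (case a02 = a20 = 0 of the geometric crystal axioms in Theorem 5.3): for all c1, c2, x0,...,x5 ∈ ℝ_{>0} one has e0^{c1}(e2^{c2}(x)) = e2^{c2}(e0^{c1}(x)). -/

import Mathlib

noncomputable section

/-- the action `e1^c` on `(x0,...,x5)` -/
def e1act (c : ℝ) (x : Fin 6 → ℝ) : Fin 6 → ℝ :=
  let x0 := x 0; let x1 := x 1; let x2 := x 2; let x3 := x 3; let x4 := x 4; let x5 := x 5
  let A1 := x0/x1 + x0*x2^3/(x1^2*x3) + x0*x2^3*x4^3/(x1^2*x3^2*x5)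
  let B1 := c*x0/x1 + x0*x2^3/(x1^2*x3) + x0*x2^3*x4^3/(x1^2*x3^2*x5)
  let B3 := c*x0/x1 + c*x0*x2^3/(x1^2*x3) + x0*x2^3*x4^3/(x1^2*x3^2*x5)
  ![x0, (B1/A1)*x1, x2, (B3/B1)*x3, x4, (c*A1/B3)*x5]

/-- the action `e2^c` on `(x0,...,x5)` -/
def e2act (c : ℝ) (x : Fin 6 → ℝ) : Fin 6 → ℝ :=
  let x0 := x 0; let x1 := x 1; let x2 := x 2; let x3 := x 3; let x4 := x 4; let x5 := x 5
  let A2 := x1/x2 + x1*x3/(x2^2*x4)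
  let B2 := c*x1/x2 + x1*x3/(x2^2*x4)
  ![x0, x1, (B2/A2)*x2, x3, (c*A2/B2)*x4, x5]

end

noncomputable section

/-- the action `e0^c` on `(x0,...,x5)` -/
def e0act (c : ℝ) (x : Fin 6 → ℝ) : Fin 6 → ℝ :=
  let x0 := x 0; let x1 := x 1; let x2 := x 2; let x3 := x 3; let x4 := x 4; let x5 := x 5
  let D := c^2*x0^2*x2^3*x3 + x1*x2^3*x3^2*x5
    + c*x0*(x1*x3^3 + 3*x1*x2*x3^2*x4 + 3*x1*x2^2*x3*x4^2 + x2^3*(x3^2 + x1*x4^3 + x1*x3*x5))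
  let E := x0^2*x2^3*x3 + x1*x2^3*x3^2*x5
    + x0*(x1*x3^3 + 3*x1*x2*x3^2*x4 + 3*x1*x2^2*x3*x4^2 + x2^3*(x3^2 + x1*x4^3 + x1*x3*x5))
  let F := c*x0^2*x2^3*x3 + x1*x2^3*x3^2*x5
    + x0*(c*x1*x3^3 + 3*c*x1*x2*x3^2*x4 + 3*c*x1*x2^2*x3*x4^2
        + x2^3*(x3^2 + c*x1*x4^3 + c*x1*x3*x5))
  let G := c*x0^2*x2^3*x3 + x1*x2^3*x3^2*x5
    + x0*(x1*x3^3 + (2+c)*x1*x2*x3^2*x4 + (1+2*c)*x1*x2^2*x3*x4^2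
        + x2^3*(x3^2 + c*x1*x4^3 + c*x1*x3*x5))
  let H := c*x0^2*x2^3*x3 + x1*x2^3*x3^2*x5
    + x0*(x1*x3^3 + 3*x1*x2*x3^2*x4 + 3*x1*x2^2*x3*x4^2 + x2^3*(x3^2 + x1*x4^3 + c*x1*x3*x5))
  ![D/(c*E)*x0, F/(c*E)*x1, G/(c*E)*x2, D*H/(c^2*E*F)*x3, D/(c*G)*x4, D/(c*H)*x5]

end

/-- The numerator `D` of `e0act`, divided by `x2 ^ 3`, in terms of `s = x3 / x2 + x4`. -/
def e0D (c x0 x1 x3 x5 s : ℝ) : ℝ :=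
  c^2*x0^2*x3 + x1*x3^2*x5 + c*x0*(x3^2 + x1*s^3 + x1*x3*x5)

/-- The numerator `F` of `e0act`, divided by `x2 ^ 3`, in terms of `s = x3 / x2 + x4`. -/
def e0F (c x0 x1 x3 x5 s : ℝ) : ℝ :=
  c*x0^2*x3 + x1*x3^2*x5 + x0*(x3^2 + c*x1*s^3 + c*x1*x3*x5)

/-- The numerator `H` of `e0act`, divided by `x2 ^ 3`, in terms of `s = x3 / x2 + x4`. -/
def e0H (c x0 x1 x3 x5 s : ℝ) : ℝ :=
  c*x0^2*x3 + x1*x3^2*x5 + x0*(x3^2 + x1*s^3 + c*x1*x3*x5)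

section

variable {c x0 x1 x2 x3 x4 x5 s : ℝ}

theorem e0D_pos (hc : 0 < c) (h0 : 0 < x0) (h1 : 0 < x1) (h3 : 0 < x3) (h5 : 0 < x5)
    (hs : 0 < s) : 0 < e0D c x0 x1 x3 x5 s := by
  unfold e0D; positivity

theorem e0F_pos (hc : 0 < c) (h0 : 0 < x0) (h1 : 0 < x1) (h3 : 0 < x3) (h5 : 0 < x5)
    (hs : 0 < s) : 0 < e0F c x0 x1 x3 x5 s := by
  unfold e0F; positivity

theorem e0H_pos (hc : 0 < c) (h0 : 0 < x0) (h1 : 0 < x1) (h3 : 0 < x3) (h5 : 0 < x5)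
    (hs : 0 < s) : 0 < e0H c x0 x1 x3 x5 s := by
  unfold e0H; positivity

theorem e2act_eq (h1 : 0 < x1) (h2 : 0 < x2) (h4 : 0 < x4) :
    e2act c ![x0, x1, x2, x3, x4, x5] =
      ![x0, x1, (c*x2*x4 + x3)/(x2*x4 + x3)*x2, x3,
        c*(x2*x4 + x3)/(c*x2*x4 + x3)*x4, x5] := by
  have hA : x1/x2 + x1*x3/(x2^2*x4) = x1/(x2^2*x4)*(x2*x4 + x3) := by field_simp
  have hB : c*x1/x2 + x1*x3/(x2^2*x4) = x1/(x2^2*x4)*(c*x2*x4 + x3) := by field_simp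
  have hk : x1/(x2^2*x4) ≠ 0 := by positivity
  simp only [e2act, Matrix.cons_val]
  rw [hA, hB, mul_div_mul_left _ _ hk, mul_left_comm c, mul_div_mul_left _ _ hk]

/-- `e0act` depends on `x2` and `x4` essentially through `s = x3 / x2 + x4`,
which is invariant under `e2act`. -/
theorem e0act_eq (h2 : 0 < x2) (hs : 0 < s) (hsx : s = x3/x2 + x4) :
    e0act c ![x0, x1, x2, x3, x4, x5] =
      ![e0D c x0 x1 x3 x5 s/(c*e0D 1 x0 x1 x3 x5 s)*x0,
        e0F c x0 x1 x3 x5 s/(c*e0D 1 x0 x1 x3 x5 s)*x1,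
        (e0F c x0 x1 x3 x5 s*x4*x2 + e0H c x0 x1 x3 x5 s*x3)/(s*(c*e0D 1 x0 x1 x3 x5 s)),
        e0D c x0 x1 x3 x5 s*e0H c x0 x1 x3 x5 s/
          (c^2*e0D 1 x0 x1 x3 x5 s*e0F c x0 x1 x3 x5 s)*x3,
        e0D c x0 x1 x3 x5 s*s*x2/
          (c*(e0F c x0 x1 x3 x5 s*x4*x2 + e0H c x0 x1 x3 x5 s*x3))*x4,
        e0D c x0 x1 x3 x5 s/(c*e0H c x0 x1 x3 x5 s)*x5] := by
  have hx3 : x3 = (s - x4)*x2 := by rw [hsx]; field_simp; ring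
  have hD : c^2*x0^2*x2^3*x3 + x1*x2^3*x3^2*x5
      + c*x0*(x1*x3^3 + 3*x1*x2*x3^2*x4 + 3*x1*x2^2*x3*x4^2
        + x2^3*(x3^2 + x1*x4^3 + x1*x3*x5)) = x2^3*e0D c x0 x1 x3 x5 s := by
    rw [e0D, hx3]; ring
  have hE : x0^2*x2^3*x3 + x1*x2^3*x3^2*x5
      + x0*(x1*x3^3 + 3*x1*x2*x3^2*x4 + 3*x1*x2^2*x3*x4^2
        + x2^3*(x3^2 + x1*x4^3 + x1*x3*x5)) = x2^3*e0D 1 x0 x1 x3 x5 s := by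
    rw [e0D, hx3]; ring
  have hF : c*x0^2*x2^3*x3 + x1*x2^3*x3^2*x5
      + x0*(c*x1*x3^3 + 3*c*x1*x2*x3^2*x4 + 3*c*x1*x2^2*x3*x4^2
        + x2^3*(x3^2 + c*x1*x4^3 + c*x1*x3*x5)) = x2^3*e0F c x0 x1 x3 x5 s := by
    rw [e0F, hx3]; ring
  have hG : c*x0^2*x2^3*x3 + x1*x2^3*x3^2*x5
      + x0*(x1*x3^3 + (2+c)*x1*x2*x3^2*x4 + (1+2*c)*x1*x2^2*x3*x4^2
        + x2^3*(x3^2 + c*x1*x4^3 + c*x1*x3*x5)) =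
      x2^3*((e0F c x0 x1 x3 x5 s*x4*x2 + e0H c x0 x1 x3 x5 s*x3)/(s*x2)) := by
    rw [e0F, e0H, hx3]; field_simp; ring
  have hH : c*x0^2*x2^3*x3 + x1*x2^3*x3^2*x5
      + x0*(x1*x3^3 + 3*x1*x2*x3^2*x4 + 3*x1*x2^2*x3*x4^2
        + x2^3*(x3^2 + x1*x4^3 + c*x1*x3*x5)) = x2^3*e0H c x0 x1 x3 x5 s := by
    rw [e0H, hx3]; ring
  simp only [e0act, Matrix.cons_val]
  rw [hD, hE, hF, hG, hH]
  generalize e0D c x0 x1 x3 x5 s = D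
  generalize e0D 1 x0 x1 x3 x5 s = E
  generalize e0F c x0 x1 x3 x5 s = F
  generalize e0H c x0 x1 x3 x5 s = H
  ext i
  fin_cases i <;> dsimp <;> field_simp

end

/-- Commutation of `e0` and `e2` (case `a02 = a20 = 0`). -/
theorem e0_e2_commute (c1 c2 : ℝ) (hc1 : 0 < c1) (hc2 : 0 < c2)
    (x : Fin 6 → ℝ) (hx : ∀ i, 0 < x i) :
    e0act c1 (e2act c2 x) = e2act c2 (e0act c1 x) := by
  have hxv : x = ![x 0, x 1, x 2, x 3, x 4, x 5] := by
    ext i; fin_cases i <;> rfl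
  have h0 := hx 0
  have h1 := hx 1
  have h2 := hx 2
  have h3 := hx 3
  have h4 := hx 4
  have h5 := hx 5
  rw [hxv]
  generalize x 0 = x0 at *
  generalize x 1 = x1 at *
  generalize x 2 = x2 at *
  generalize x 3 = x3 at *
  generalize x 4 = x4 at *
  generalize x 5 = x5 at *
  obtain ⟨s, hsx⟩ : ∃ s, s = x3/x2 + x4 := ⟨_, rfl⟩
  have hs : 0 < s := by rw [hsx]; positivity
  have hs_inv : s = x3/((c2*x2*x4 + x3)/(x2*x4 + x3)*x2)
      + c2*(x2*x4 + x3)/(c2*x2*x4 + x3)*x4 := by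
    rw [hsx]; field_simp; ring
  rw [e2act_eq h1 h2 h4, e0act_eq (by positivity) hs hs_inv, e0act_eq h2 hs hsx]
  have hD := e0D_pos hc1 h0 h1 h3 h5 hs
  have hE := e0D_pos one_pos h0 h1 h3 h5 hs
  have hF := e0F_pos hc1 h0 h1 h3 h5 hs
  have hH := e0H_pos hc1 h0 h1 h3 h5 hs
  generalize e0D c1 x0 x1 x3 x5 s = D at *
  generalize e0D 1 x0 x1 x3 x5 s = E at *
  generalize e0F c1 x0 x1 x3 x5 s = F at *
  generalize e0H c1 x0 x1 x3 x5 s = H at *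
  rw [e2act_eq (by positivity) (by positivity) (by positivity)]
  ext i
  fin_cases i <;> dsimp <;> field_simp
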